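/- (Pointwise decay for the homogeneous wave equation.) Fix α ∈ (0,1). There exists a constant C > 0 (depending only on α) such that the following holds: if w : [0,∞) × ℝ³ → ℝ is a C² function satisfying ∂_t²w = Δ_xw on (0,∞) × ℝ³ with w(0,·) = w₀ and ∂_tw(0,·) = w₁, where w₀ is C³ and w₁ is C², then for all t ≥ 0 and x ∈ ℝ³, (1 + t + |x|)·(1 + |t − |x||)^α·|w(t,x)| ≤ C·sup_{y ∈ ℝ³} [ (1+|y|)^{2+α}·(|w₁(y)| + |∇w₀(y)|) + (1+|y|)^{1+α}·|w₀(y)| ]. -/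

import Mathlib

/-! The estimate follows from Kirchhoff's formula
`4π w(T, x) = ∫_{S²} (w₀ + T (∂_ω w₀ + w₁))(x + Tω) dω`.

The formula itself (`kirchhoff`) comes from a divergence identity on the backward light cone with
vertex `(T, x)`. In spherical coordinates `(s, θ, φ)` on the cone, where the point is
`(T - s, x + sω)`, the field
`A = sin θ (w + s (∂_t w + ∂_ω w))`, `B = sin θ ∂_{e_θ} w`, `C = ∂_{e_φ} w`
satisfies `∂_s A + ∂_θ B + ∂_φ C = s sin θ (Δw - ∂_t² w) = 0`. It has no singularity at the poles or
at the vertex, `B` vanishes for `θ = 0, π`, and `C` is `2π`-periodic in `φ`. Hence the integral of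
`A` over the base `s = T` of the cone equals its integral `4π w(T, x)` over the vertex `s = 0`
(`box_divergence`).

For the decay, the polar axis is taken along `x`. With `r = ‖x‖`, the hypothesis bounds the integrand
by a multiple of `M` times powers of `1 + ‖y‖²` on the sphere `‖y‖² = r² + T² + 2rT cos θ`, and the
resulting integrals in `θ` are elementary (`integral_sin_quad_rpow`, `profile_bound`). -/

noncomputable section

/-- Euclidean `ℝ³`. -/
abbrev E3 := EuclideanSpace ℝ (Fin 3)

/-- Point of `ℝ × ℝ³`. -/
abbrev PtE := ℝ × E3

open MeasureTheory Set Filter Topology Real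

/-! ### Divergence-free fields on a box -/

/-- The flux of a divergence-free field `(A, B, C)` through the faces `s = 0` and `s = T` of the box
`[0, T] × [0, π] × [0, 2π]` is the same, provided that nothing is lost through the other faces. The
derivatives are required only for `s` in the open interval, since the wave equation holds only for
positive times. -/
theorem box_divergence {T : ℝ} (hT : 0 ≤ T) (A B C a b c : ℝ → ℝ → ℝ → ℝ)
    (hAc : Continuous fun p : ℝ × ℝ × ℝ => A p.1 p.2.1 p.2.2)
    (hac : Continuous fun p : ℝ × ℝ × ℝ => a p.1 p.2.1 p.2.2)
    (hbc : Continuous fun p : ℝ × ℝ × ℝ => b p.1 p.2.1 p.2.2)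
    (hcc : Continuous fun p : ℝ × ℝ × ℝ => c p.1 p.2.1 p.2.2)
    (hA : ∀ s ∈ Ioo 0 T, ∀ θ φ, HasDerivAt (fun s => A s θ φ) (a s θ φ) s)
    (hB : ∀ s ∈ Ioo 0 T, ∀ θ φ, HasDerivAt (fun θ => B s θ φ) (b s θ φ) θ)
    (hC : ∀ s ∈ Ioo 0 T, ∀ θ φ, HasDerivAt (fun φ => C s θ φ) (c s θ φ) φ)
    (hB0 : ∀ s φ, B s 0 φ = B s π φ) (hC0 : ∀ s θ, C s θ 0 = C s θ (2 * π))
    (habc : ∀ s ∈ Ioo 0 T, ∀ θ φ, a s θ φ + b s θ φ + c s θ φ = 0) :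
    ∫ θ in 0..π, ∫ φ in 0..2 * π, A T θ φ = ∫ θ in 0..π, ∫ φ in 0..2 * π, A 0 θ φ := by
  have slice : ∀ f : ℝ → ℝ → ℝ → ℝ, (Continuous fun p : ℝ × ℝ × ℝ => f p.1 p.2.1 p.2.2) →
      ∀ s, Continuous fun q : ℝ × ℝ => f s q.1 q.2 := fun f hf s =>
    hf.comp (f := fun q : ℝ × ℝ => (s, q.1, q.2)) (by fun_prop)
  have inner : ∀ f : ℝ → ℝ → ℝ, (Continuous fun q : ℝ × ℝ => f q.1 q.2) →
      Continuous fun θ => ∫ φ in 0..2 * π, f θ φ := fun f hf =>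
    intervalIntegral.continuous_parametric_intervalIntegral_of_continuous' hf _ _
  have swap : ∀ (f : ℝ → ℝ → ℝ) (l m n o : ℝ), (Continuous fun q : ℝ × ℝ => f q.1 q.2) →
      ∫ x in l..m, ∫ y in n..o, f x y = ∫ y in n..o, ∫ x in l..m, f x y := by
    intro f l m n o hf
    apply intervalIntegral_intervalIntegral_swap
    refine (ContinuousOn.integrableOn_compact (K := uIcc l m ×ˢ uIcc n o)
      (isCompact_uIcc.prod isCompact_uIcc) hf.continuousOn).mono_set ?_
    exact prod_mono uIoc_subset_uIcc uIoc_subset_uIcc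
  -- at each fixed `s` the angular divergence integrates to zero
  have zero : ∀ s ∈ Ioo 0 T, ∫ θ in 0..π, ∫ φ in 0..2 * π, a s θ φ = 0 := by
    intro s hs
    have hb : ∫ θ in 0..π, ∫ φ in 0..2 * π, b s θ φ = 0 := by
      rw [swap (b s) _ _ _ _ (slice b hbc s)]
      have : ∀ φ, ∫ θ in 0..π, b s θ φ = 0 := fun φ => by
        rw [intervalIntegral.integral_eq_sub_of_hasDerivAt (f := fun θ => B s θ φ)
          (fun θ _ => hB s hs θ φ), hB0, sub_self]
        exact ((slice b hbc s).comp (f := fun θ => (θ, φ)) (by fun_prop)).intervalIntegrable _ _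
      simp [this]
    have hc : ∫ θ in 0..π, ∫ φ in 0..2 * π, c s θ φ = 0 := by
      have : ∀ θ, ∫ φ in 0..2 * π, c s θ φ = 0 := fun θ => by
        rw [intervalIntegral.integral_eq_sub_of_hasDerivAt (f := fun φ => C s θ φ)
          (fun φ _ => hC s hs θ φ), hC0, sub_self]
        exact ((slice c hcc s).comp (f := fun φ => (θ, φ)) (by fun_prop)).intervalIntegrable _ _
      simp [this]
    have e : ∀ θ, ∫ φ in 0..2 * π, a s θ φ =
        -(∫ φ in 0..2 * π, b s θ φ) - ∫ φ in 0..2 * π, c s θ φ := by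
      intro θ
      rw [← intervalIntegral.integral_neg, ← intervalIntegral.integral_sub]
      · congr 1; ext φ; linarith [habc s hs θ φ]
      · exact (((slice b hbc s).comp (f := fun φ => (θ, φ)) (by fun_prop)).neg).intervalIntegrable _ _
      · exact ((slice c hcc s).comp (f := fun φ => (θ, φ)) (by fun_prop)).intervalIntegrable _ _
    simp_rw [e]
    rw [intervalIntegral.integral_sub, intervalIntegral.integral_neg, hb, hc]
    · simp
    · exact (inner _ (slice b hbc s)).neg.intervalIntegrable _ _
    · exact (inner _ (slice c hcc s)).intervalIntegrable _ _
  have total : ∫ s in 0..T, ∫ θ in 0..π, ∫ φ in 0..2 * π, a s θ φ = 0 := by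
    rw [intervalIntegral.integral_of_le hT, integral_Ioc_eq_integral_Ioo,
      setIntegral_congr_fun measurableSet_Ioo (g := fun _ => (0 : ℝ)) zero]
    simp
  rw [swap (fun s θ => ∫ φ in 0..2 * π, a s θ φ)] at total
  swap
  · exact intervalIntegral.continuous_parametric_intervalIntegral_of_continuous'
      (f := fun (q : ℝ × ℝ) φ => a q.1 q.2 φ)
      (hac.comp (f := fun r : (ℝ × ℝ) × ℝ => (r.1.1, r.1.2, r.2)) (by fun_prop)) _ _
  have e : ∀ θ, ∫ s in 0..T, ∫ φ in 0..2 * π, a s θ φ =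
      (∫ φ in 0..2 * π, A T θ φ) - ∫ φ in 0..2 * π, A 0 θ φ := by
    intro θ
    rw [swap (fun s φ => a s θ φ) _ _ _ _
      (hac.comp (f := fun r : ℝ × ℝ => (r.1, θ, r.2)) (by fun_prop)),
      ← intervalIntegral.integral_sub]
    · congr 1; ext φ
      refine intervalIntegral.integral_eq_sub_of_hasDerivAt_of_le hT
        (f := fun s => A s θ φ) ?_ (fun s hs => hA s hs θ φ) ?_
      · exact (hAc.comp (f := fun s => (s, θ, φ)) (by fun_prop)).continuousOn
      · exact (hac.comp (f := fun s => (s, θ, φ)) (by fun_prop)).intervalIntegrable _ _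
    · exact ((slice A hAc T).comp (f := fun φ => (θ, φ)) (by fun_prop)).intervalIntegrable _ _
    · exact ((slice A hAc 0).comp (f := fun φ => (θ, φ)) (by fun_prop)).intervalIntegrable _ _
  simp_rw [e] at total
  rw [intervalIntegral.integral_sub ((inner _ (slice A hAc T)).intervalIntegrable _ _)
    ((inner _ (slice A hAc 0)).intervalIntegrable _ _)] at total
  linarith

/-! ### Spherical coordinates in an orthonormal frame -/

/-- The trace of a bilinear form (the Laplacian, for a Hessian) does not depend on the frame. -/
theorem sum_basis (L : E3 →L[ℝ] E3 →L[ℝ] ℝ) (b : OrthonormalBasis (Fin 3) ℝ E3) :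
    ∑ i, L (EuclideanSpace.single i 1) (EuclideanSpace.single i 1) =
      L (b 0) (b 0) + L (b 1) (b 1) + L (b 2) (b 2) := by
  have h := (InnerProductSpace.canonicalCovariantTensor_eq_sum E3
    (EuclideanSpace.basisFun (Fin 3) ℝ)).symm.trans
    (InnerProductSpace.canonicalCovariantTensor_eq_sum E3 b)
  have h2 := congrArg (TensorProduct.lift (L.toLinearMap₁₂)) h
  simpa [Fin.sum_univ_three] using h2

/-- The unit vector with polar angle `θ` (from the axis `b 2`) and azimuth `φ`. -/
def sphDir (b : OrthonormalBasis (Fin 3) ℝ E3) (θ φ : ℝ) : E3 :=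
  (sin θ * cos φ) • b 0 + (sin θ * sin φ) • b 1 + cos θ • b 2

/-- The unit tangent vector of the sphere in the direction of increasing `θ`. -/
def sphTheta (b : OrthonormalBasis (Fin 3) ℝ E3) (θ φ : ℝ) : E3 :=
  (cos θ * cos φ) • b 0 + (cos θ * sin φ) • b 1 - sin θ • b 2

/-- The unit tangent vector of the sphere in the direction of increasing `φ`; it does not depend
on `θ`. -/
def sphPhi (b : OrthonormalBasis (Fin 3) ℝ E3) (φ : ℝ) : E3 :=
  (-sin φ) • b 0 + cos φ • b 1

@[fun_prop]
theorem continuous_sphDir (b : OrthonormalBasis (Fin 3) ℝ E3) {X : Type*} [TopologicalSpace X]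
    {f g : X → ℝ} (hf : Continuous f) (hg : Continuous g) :
    Continuous fun x => sphDir b (f x) (g x) := by
  unfold sphDir; fun_prop

@[fun_prop]
theorem continuous_sphTheta (b : OrthonormalBasis (Fin 3) ℝ E3) {X : Type*} [TopologicalSpace X]
    {f g : X → ℝ} (hf : Continuous f) (hg : Continuous g) :
    Continuous fun x => sphTheta b (f x) (g x) := by
  unfold sphTheta; fun_prop

@[fun_prop]
theorem continuous_sphPhi (b : OrthonormalBasis (Fin 3) ℝ E3) {X : Type*} [TopologicalSpace X]
    {f : X → ℝ} (hf : Continuous f) : Continuous fun x => sphPhi b (f x) := by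
  unfold sphPhi; fun_prop

/-- The trace in the rotated frame `sphDir`, `sphTheta`, `sphPhi` equals the trace in `b`. -/
theorem frame_trace (L : E3 →L[ℝ] E3 →L[ℝ] ℝ) (b : OrthonormalBasis (Fin 3) ℝ E3) (θ φ : ℝ) :
    L (sphDir b θ φ) (sphDir b θ φ) + L (sphTheta b θ φ) (sphTheta b θ φ)
      + L (sphPhi b φ) (sphPhi b φ) = L (b 0) (b 0) + L (b 1) (b 1) + L (b 2) (b 2) := by
  simp only [sphDir, sphTheta, sphPhi, map_add, map_sub, map_smul, add_apply,
    sub_apply, smul_apply, smul_eq_mul]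
  linear_combination (sin_sq_add_cos_sq θ) * (cos φ ^ 2 * L (b 0) (b 0)
    + cos φ * sin φ * (L (b 0) (b 1) + L (b 1) (b 0)) + sin φ ^ 2 * L (b 1) (b 1)
    + L (b 2) (b 2)) + (sin_sq_add_cos_sq φ) * (L (b 0) (b 0) + L (b 1) (b 1))

theorem hasDerivAt_sphDir_theta (b : OrthonormalBasis (Fin 3) ℝ E3) (θ φ : ℝ) :
    HasDerivAt (fun θ => sphDir b θ φ) (sphTheta b θ φ) θ := by
  have := (((hasDerivAt_sin θ).mul_const (cos φ)).smul_const (b 0)).add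
    (((hasDerivAt_sin θ).mul_const (sin φ)).smul_const (b 1)) |>.add
    ((hasDerivAt_cos θ).smul_const (b 2))
  refine this.congr_deriv ?_
  simp only [sphTheta]; module

theorem hasDerivAt_sphTheta_theta (b : OrthonormalBasis (Fin 3) ℝ E3) (θ φ : ℝ) :
    HasDerivAt (fun θ => sphTheta b θ φ) (-sphDir b θ φ) θ := by
  have := (((hasDerivAt_cos θ).mul_const (cos φ)).smul_const (b 0)).add
    (((hasDerivAt_cos θ).mul_const (sin φ)).smul_const (b 1)) |>.sub
    ((hasDerivAt_sin θ).smul_const (b 2))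
  refine this.congr_deriv ?_
  simp only [sphDir]; module

theorem hasDerivAt_sphDir_phi (b : OrthonormalBasis (Fin 3) ℝ E3) (θ φ : ℝ) :
    HasDerivAt (fun φ => sphDir b θ φ) (sin θ • sphPhi b φ) φ := by
  have := (((hasDerivAt_cos φ).const_mul (sin θ)).smul_const (b 0)).add
    (((hasDerivAt_sin φ).const_mul (sin θ)).smul_const (b 1)) |>.add_const
    (cos θ • b 2)
  refine this.congr_deriv ?_
  simp only [sphPhi]; module

theorem hasDerivAt_sphPhi_phi (b : OrthonormalBasis (Fin 3) ℝ E3) (θ φ : ℝ) :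
    HasDerivAt (fun φ => sphPhi b φ) (-(sin θ • sphDir b θ φ) - cos θ • sphTheta b θ φ) φ := by
  have := ((hasDerivAt_sin φ).neg.smul_const (b 0)).add ((hasDerivAt_cos φ).smul_const (b 1))
  refine this.congr_deriv ?_
  have h := sin_sq_add_cos_sq θ
  have h2 : sin θ ^ 2 = 1 - cos θ ^ 2 := by linarith
  simp only [sphDir, sphTheta]
  match_scalars
  · linear_combination (cos φ) * h2
  · linear_combination (sin φ) * h2
  · ring

theorem norm_add_smul_sphDir_sq (b : OrthonormalBasis (Fin 3) ℝ E3) (r T θ φ : ℝ) :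
    ‖r • b 2 + T • sphDir b θ φ‖ ^ 2 = r ^ 2 + T ^ 2 + 2 * r * T * cos θ := by
  have h : r • b 2 + T • sphDir b θ φ = (T * sin θ * cos φ) • b 0 + (T * sin θ * sin φ) • b 1
      + (r + T * cos θ) • b 2 := by simp only [sphDir]; module
  have o := orthonormal_iff_ite.1 b.orthonormal
  rw [h, ← real_inner_self_eq_norm_sq]
  simp only [inner_add_left, inner_add_right, real_inner_smul_left, real_inner_smul_right, o]
  simp
  linear_combination (T ^ 2 * sin θ ^ 2) * (sin_sq_add_cos_sq φ) + T ^ 2 * sin_sq_add_cos_sq θ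

theorem norm_sphDir (b : OrthonormalBasis (Fin 3) ℝ E3) (θ φ : ℝ) : ‖sphDir b θ φ‖ = 1 := by
  have := norm_add_smul_sphDir_sq b 0 1 θ φ
  simp only [zero_smul, one_smul, zero_add] at this
  rw [← pow_left_inj₀ (norm_nonneg _) zero_le_one two_ne_zero, this]; norm_num

/-! ### Kirchhoff's formula -/

theorem hasDerivAt_clm_path {G : PtE → PtE →L[ℝ] ℝ} {K : PtE →L[ℝ] PtE →L[ℝ] ℝ}
    {γ u : ℝ → PtE} {γ' u' : PtE} {s : ℝ} (hG : HasFDerivAt G K (γ s)) (hγ : HasDerivAt γ γ' s)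
    (hu : HasDerivAt u u' s) :
    HasDerivAt (fun s => G (γ s) (u s)) (K γ' (u s) + G (γ s) u') s :=
  (hG.comp_hasDerivAt s hγ).clm_apply hu

/-- **Kirchhoff's formula** in spherical coordinates, for a function `V` with gradient `G` and
Hessian `K`, solving the wave equation at positive times. The derivative in the direction
`(1, ω)` at `(0, x + Tω)` collects `∂ₜV + ∂_ωV`. -/
theorem kirchhoff (V : PtE → ℝ) (G : PtE → PtE →L[ℝ] ℝ) (K : PtE → PtE →L[ℝ] PtE →L[ℝ] ℝ)
    (hVc : Continuous V) (hGc : Continuous G) (hKc : Continuous K)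
    (hV : ∀ p : PtE, 0 < p.1 → HasFDerivAt V (G p) p)
    (hG : ∀ p : PtE, 0 < p.1 → HasFDerivAt G (K p) p)
    (hK : ∀ p : PtE, 0 < p.1 → K p (1, 0) (1, 0) =
      ∑ i, K p (0, EuclideanSpace.single i 1) (0, EuclideanSpace.single i 1))
    (b : OrthonormalBasis (Fin 3) ℝ E3) {T : ℝ} (hT : 0 ≤ T) (x : E3) :
    ∫ θ in 0..π, ∫ φ in 0..2 * π, sin θ * (V (0, x + T • sphDir b θ φ)
      + T * G (0, x + T • sphDir b θ φ) (1, sphDir b θ φ)) = 4 * π * V (T, x) := by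
  -- The field is the flux of the backward light cone with vertex `(T, x)`: writing `ω` for
  -- `sphDir b θ φ`, all quantities are evaluated at the point `(T - s, x + sω)` of the cone.
  have key := box_divergence hT
    (fun s θ φ => sin θ * (V (T - s, x + s • sphDir b θ φ)
      + s * G (T - s, x + s • sphDir b θ φ) (1, sphDir b θ φ)))
    (fun s θ φ => sin θ * G (T - s, x + s • sphDir b θ φ) (0, sphTheta b θ φ))
    (fun s θ φ => G (T - s, x + s • sphDir b θ φ) (0, sphPhi b φ))
    (fun s θ φ => sin θ * (G (T - s, x + s • sphDir b θ φ) (-1, sphDir b θ φ)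
      + (1 * G (T - s, x + s • sphDir b θ φ) (1, sphDir b θ φ)
      + s * K (T - s, x + s • sphDir b θ φ) (-1, sphDir b θ φ) (1, sphDir b θ φ))))
    (fun s θ φ => cos θ * G (T - s, x + s • sphDir b θ φ) (0, sphTheta b θ φ)
      + sin θ * (K (T - s, x + s • sphDir b θ φ) (0, s • sphTheta b θ φ) (0, sphTheta b θ φ)
        + G (T - s, x + s • sphDir b θ φ) (0, -sphDir b θ φ)))
    (fun s θ φ =>
      K (T - s, x + s • sphDir b θ φ) (0, s • sin θ • sphPhi b φ) (0, sphPhi b φ)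
        + G (T - s, x + s • sphDir b θ φ)
          (0, -(sin θ • sphDir b θ φ) - cos θ • sphTheta b θ φ))
    (by fun_prop) (by fun_prop) (by fun_prop) (by fun_prop)
    (fun s hs θ φ => by
      have hp : 0 < (T - s, x + s • sphDir b θ φ).1 := sub_pos.2 hs.2
      have hpath : HasDerivAt (fun s : ℝ => ((T - s, x + s • sphDir b θ φ) : PtE))
          (-1, sphDir b θ φ) s :=
        ((hasDerivAt_id s).const_sub T).prodMk (by
          simpa using ((hasDerivAt_id s).smul_const (sphDir b θ φ)).const_add x)
      have h1 := (hV _ hp).comp_hasDerivAt s hpath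
      have h2 := hasDerivAt_clm_path (hG _ hp) hpath
        (hasDerivAt_const s ((1, sphDir b θ φ) : PtE))
      refine ((h1.add ((hasDerivAt_id s).mul h2)).const_mul (sin θ)).congr_deriv ?_
      simp)
    (fun s hs θ φ => by
      have hp : 0 < (T - s, x + s • sphDir b θ φ).1 := sub_pos.2 hs.2
      have hpath : HasDerivAt (fun θ : ℝ => ((T - s, x + s • sphDir b θ φ) : PtE))
          (0, s • sphTheta b θ φ) θ :=
        (hasDerivAt_const θ (T - s)).prodMk
          (((hasDerivAt_sphDir_theta b θ φ).const_smul s).const_add x)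
      have h2 := hasDerivAt_clm_path (hG _ hp) hpath
        ((hasDerivAt_const θ (0 : ℝ)).prodMk (hasDerivAt_sphTheta_theta b θ φ))
      exact (hasDerivAt_sin θ).mul h2)
    (fun s hs θ φ => by
      have hp : 0 < (T - s, x + s • sphDir b θ φ).1 := sub_pos.2 hs.2
      have hpath : HasDerivAt (fun φ : ℝ => ((T - s, x + s • sphDir b θ φ) : PtE))
          (0, s • sin θ • sphPhi b φ) φ :=
        (hasDerivAt_const φ (T - s)).prodMk
          (((hasDerivAt_sphDir_phi b θ φ).const_smul s).const_add x)
      exact hasDerivAt_clm_path (hG _ hp) hpath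
        ((hasDerivAt_const φ (0 : ℝ)).prodMk (hasDerivAt_sphPhi_phi b θ φ)))
    (fun s φ => by simp) (fun s θ => by simp [sphDir, sphPhi])
    (fun s hs θ φ => by
      have hp : 0 < (T - s, x + s • sphDir b θ φ).1 := sub_pos.2 hs.2
      have hsym : ∀ u v, K (T - s, x + s • sphDir b θ φ) u v
          = K (T - s, x + s • sphDir b θ φ) v u := by
        refine second_derivative_symmetric_of_eventually ?_ (hG _ hp) (f := V)
        filter_upwards [(isOpen_lt continuous_const continuous_fst).mem_nhds hp] with q hq
        exact hV q hq
      have hw := hK _ hp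
      generalize K (T - s, x + s • sphDir b θ φ) = k at *
      generalize G (T - s, x + s • sphDir b θ φ) = g at *
      let L : E3 →L[ℝ] E3 →L[ℝ] ℝ := k.bilinearComp (.inr ℝ ℝ E3) (.inr ℝ ℝ E3)
      have hL : ∀ u v, k (0, u) (0, v) = L u v := fun u v => rfl
      have hg : ∀ (r : ℝ) u, g (r, u) = r * g (1, 0) + g (0, u) := fun r u => by
        rw [← smul_eq_mul, ← map_smul, ← map_add]; simp
      have hk1 : k (-1, sphDir b θ φ) = -k (1, 0) + k (0, sphDir b θ φ) := by
        rw [← map_neg, ← map_add]; simp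
      have hk2 : ∀ l : PtE →L[ℝ] ℝ, l (1, sphDir b θ φ) = l (1, 0) + l (0, sphDir b θ φ) := by
        intro l
        rw [← map_add]; simp
      have h0 : ∀ u : E3, g (0, u) = (g.comp (.inr ℝ ℝ E3)) u := fun u => rfl
      have htr := frame_trace L b θ φ
      have hb := sum_basis L b
      simp only [hL] at hw
      rw [hg (-1) (sphDir b θ φ), hg 1 (sphDir b θ φ), hk1]
      have hks : ∀ u v, k (0, s • u) (0, v) = s * k (0, u) (0, v) := fun u v => by
        simp [hL]
      have hks' : ∀ u v, k (0, sin θ • u) (0, v) = sin θ * k (0, u) (0, v) := fun u v => by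
        simp [hL]
      simp only [hks, hks', hk2, add_apply, neg_apply, hsym (0, sphDir b θ φ) (1, 0), hw, hL]
      simp only [h0, map_sub, map_neg, map_smul, smul_eq_mul]
      linear_combination (s * sin θ) * (htr - hb))
  simp only [sub_self, zero_smul, sub_zero, add_zero, zero_mul] at key
  rw [key]
  simp only [intervalIntegral.integral_const, smul_eq_mul, sub_zero,
    intervalIntegral.integral_const_mul, intervalIntegral.integral_mul_const, integral_sin,
    cos_zero, cos_pi]
  ring

/-! ### Integrals of radial weights over a sphere -/

theorem one_add_quad_ge {r T : ℝ} (hr : 0 ≤ r) (hT : 0 ≤ T) (θ : ℝ) :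
    1 + (T - r) ^ 2 ≤ 1 + (r ^ 2 + T ^ 2 + 2 * r * T * cos θ) := by
  nlinarith [mul_nonneg (mul_nonneg hr hT) (by linarith [neg_one_le_cos θ] : 0 ≤ 1 + cos θ)]

theorem continuous_quad_rpow {r T : ℝ} (hr : 0 ≤ r) (hT : 0 ≤ T) (γ : ℝ) :
    Continuous fun θ => (1 + (r ^ 2 + T ^ 2 + 2 * r * T * cos θ)) ^ γ := by
  refine Continuous.rpow_const (by fun_prop) fun θ => Or.inl ?_
  exact ne_of_gt (lt_of_lt_of_le (by positivity) (one_add_quad_ge hr hT θ))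

/-- By the law of cosines, `r² + T² + 2rT cos θ` is `‖x + Tω‖²` for `r = ‖x‖` and `ω` at angle `θ`
from `x`; powers of `1 + ‖x + Tω‖²` therefore have an elementary antiderivative with respect to the
density `sin θ dθ`. -/
theorem integral_sin_quad_rpow {r T γ : ℝ} (hr : 0 < r) (hT : 0 < T) (hγ : γ ≠ 0) :
    ∫ θ in 0..π, sin θ * (1 + (r ^ 2 + T ^ 2 + 2 * r * T * cos θ)) ^ (-γ - 1) =
      1 / (2 * γ * r * T) * ((1 + (T - r) ^ 2) ^ (-γ) - (1 + (T + r) ^ 2) ^ (-γ)) := by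
  rw [intervalIntegral.integral_eq_sub_of_hasDerivAt
    (f := fun θ => 1 / (2 * γ * r * T) * (1 + (r ^ 2 + T ^ 2 + 2 * r * T * cos θ)) ^ (-γ))]
  · simp only [cos_pi, cos_zero]
    rw [← mul_sub]
    ring_nf
  · intro θ _
    have hpos : 0 < 1 + (r ^ 2 + T ^ 2 + 2 * r * T * cos θ) :=
      lt_of_lt_of_le (by positivity) (one_add_quad_ge hr.le hT.le θ)
    have h1 : HasDerivAt (fun θ => 1 + (r ^ 2 + T ^ 2 + 2 * r * T * cos θ))
        (2 * r * T * -sin θ) θ :=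
      (((hasDerivAt_cos θ).const_mul _).const_add _).const_add _
    refine ((h1.rpow_const (p := -γ) (Or.inl hpos.ne')).const_mul
      (1 / (2 * γ * r * T))).congr_deriv ?_
    field_simp
  · exact (continuous_sin.mul (continuous_quad_rpow hr.le hT.le _)).intervalIntegrable _ _

/-- On the sphere, `1 + ‖y‖² ≥ 1 + (T - r)² ≥ ((1 + |T - r|) / 2)²`. -/
theorem quad_rpow_le {r T β q : ℝ} (hβ : 0 ≤ β) (hq : 1 + (T - r) ^ 2 ≤ q) :
    q ^ (-(β / 2)) ≤ 2 ^ β * (1 + |T - r|) ^ (-β) := by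
  set z := 1 + |T - r| with hz
  have hz1 : 1 ≤ z := by have := abs_nonneg (T - r); linarith
  have h : (z / 2) ^ 2 ≤ q := by
    have := sq_abs (T - r)
    nlinarith [sq_nonneg (|T - r| - 1)]
  calc q ^ (-(β / 2)) ≤ ((z / 2) ^ 2) ^ (-(β / 2)) :=
        rpow_le_rpow_of_nonpos (by positivity) h (by linarith)
    _ = (z / 2) ^ (-β) := by
        rw [← rpow_natCast, ← rpow_mul (by positivity)]; congr 1; push_cast; ring
    _ = _ := by
        rw [div_rpow (by positivity) (by positivity), rpow_neg (x := 2) (by norm_num)]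
        field_simp

theorem sqrt_diff_le {r T : ℝ} (hr : 0 ≤ r) :
    (1 + (T + r) ^ 2) ^ (1 / 2 : ℝ) - (1 + (T - r) ^ 2) ^ (1 / 2 : ℝ) ≤ 2 * r := by
  rw [← sqrt_eq_rpow, ← sqrt_eq_rpow, sub_le_iff_le_add]
  refine sqrt_le_iff.2 ⟨by positivity, ?_⟩
  have h1 := sq_sqrt (by positivity : 0 ≤ 1 + (T - r) ^ 2)
  have h2 : T - r ≤ √(1 + (T - r) ^ 2) := le_sqrt_of_sq_le (by linarith)
  nlinarith

/-- Decay of the spherical mean of the weights that control the data. When `1 + T + r` is comparable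
to `1 + |T - r|` the pointwise bound `quad_rpow_le` suffices. Otherwise `r` and `T` are both
comparable to `1 + T + r`, and `integral_sin_quad_rpow` gains a factor `1 / r` for the weight of
`w₁` and `∇w₀` (with `γ = α / 2`), and a factor `1 / T` for the weight of `w₀`, after splitting off
`(1 + ‖y‖²) ^ (-α / 2)` and taking `γ = -1 / 2`. -/
theorem profile_bound {α r T : ℝ} (hα0 : 0 < α) (hα1 : α < 1) (hr : 0 ≤ r) (hT : 0 ≤ T) :
    (1 + T + r) * (1 + |T - r|) ^ α *
      ∫ θ in 0..π, sin θ * ((1 + (r ^ 2 + T ^ 2 + 2 * r * T * cos θ)) ^ (-((1 + α) / 2))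
        + T * (1 + (r ^ 2 + T ^ 2 + 2 * r * T * cos θ)) ^ (-((2 + α) / 2)))
      ≤ 180 + 6 / α := by
  set z := 1 + |T - r| with hz
  have hz1 : 1 ≤ z := by have := abs_nonneg (T - r); linarith
  have hz0 : 0 < z := by linarith
  have hα6 : 0 ≤ 6 / α := by positivity
  have hα2 : (2 : ℝ) ^ α ≤ 2 := by
    simpa using rpow_le_rpow_of_exponent_le (one_le_two (α := ℝ)) hα1.le
  have hcont : ∀ γ : ℝ, Continuous fun θ => (1 + (r ^ 2 + T ^ 2 + 2 * r * T * cos θ)) ^ γ :=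
    continuous_quad_rpow hr hT
  have hsin : ∀ θ ∈ Icc 0 π, 0 ≤ sin θ := fun θ hθ => sin_nonneg_of_mem_Icc hθ
  have hzz : z ^ α * z ^ (-α) = 1 := by rw [← rpow_add hz0]; simp
  rcases le_or_gt (1 + T + r) (3 * z) with hI | hII
  -- away from the light cone, or near the origin of space-time
  · have hint : ∫ θ in 0..π, sin θ * ((1 + (r ^ 2 + T ^ 2 + 2 * r * T * cos θ)) ^ (-((1 + α) / 2))
        + T * (1 + (r ^ 2 + T ^ 2 + 2 * r * T * cos θ)) ^ (-((2 + α) / 2)))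
        ≤ ∫ θ in 0..π, sin θ * (28 * z ^ (-α) / z) := by
      refine intervalIntegral.integral_mono_on pi_pos.le ?_ ?_ fun θ hθ => ?_
      · exact (continuous_sin.mul ((hcont _).add ((hcont _).const_mul T))).intervalIntegrable _ _
      · exact (continuous_sin.mul continuous_const).intervalIntegrable _ _
      refine mul_le_mul_of_nonneg_left ?_ (hsin θ hθ)
      have h1 := quad_rpow_le (by linarith : 0 ≤ 1 + α) (one_add_quad_ge hr hT θ)
      have h2 := quad_rpow_le (by linarith : 0 ≤ 2 + α) (one_add_quad_ge hr hT θ)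
      rw [← hz] at h1 h2
      have e1 : (2 : ℝ) ^ (1 + α) ≤ 4 := by
        rw [rpow_add two_pos, rpow_one]; linarith
      have e2 : (2 : ℝ) ^ (2 + α) ≤ 8 := by
        rw [rpow_add two_pos]; norm_num; linarith
      have f1 : z ^ (-(1 + α)) = z ^ (-α) / z := by
        rw [show -(1 + α) = -α - 1 by ring, rpow_sub_one hz0.ne']
      have f2 : z ^ (-(2 + α)) = z ^ (-α) / z / z := by
        rw [show -(2 + α) = -α - 1 - 1 by ring, rpow_sub_one hz0.ne', rpow_sub_one hz0.ne']
      rw [f1] at h1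
      rw [f2] at h2
      have hp : 0 ≤ z ^ (-α) / z := by positivity
      have g1 := h1.trans (mul_le_mul_of_nonneg_right e1 hp)
      have g2 := h2.trans (mul_le_mul_of_nonneg_right e2 (div_nonneg hp hz0.le))
      have hT3 : T ≤ 3 * z := by linarith
      have g3 : T * (1 + (r ^ 2 + T ^ 2 + 2 * r * T * cos θ)) ^ (-((2 + α) / 2))
          ≤ 3 * z * (8 * (z ^ (-α) / z / z)) :=
        mul_le_mul hT3 g2 (rpow_nonneg (by linarith [one_add_quad_ge hr hT θ, sq_nonneg (T - r)]) _)
          (by positivity)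
      have g4 : 3 * z * (8 * (z ^ (-α) / z / z)) = 24 * (z ^ (-α) / z) := by field_simp; ring
      rw [mul_div_assoc]
      linarith
    rw [intervalIntegral.integral_mul_const, integral_sin, cos_zero, cos_pi] at hint
    calc _ ≤ (3 * z) * z ^ α * ((1 - -1) * (28 * z ^ (-α) / z)) := by
          refine mul_le_mul (by gcongr) hint ?_ (by positivity)
          refine intervalIntegral.integral_nonneg pi_pos.le fun θ hθ => mul_nonneg (hsin θ hθ) ?_
          have : 0 ≤ 1 + (r ^ 2 + T ^ 2 + 2 * r * T * cos θ) := by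
            linarith [one_add_quad_ge hr hT θ, sq_nonneg (T - r)]
          positivity
      _ = 168 * (z ^ α * z ^ (-α)) := by field_simp; ring
      _ ≤ _ := by rw [hzz]; linarith
  -- near the light cone, where `2 * min r T = T + r - |T - r| ≥ 2 / 3 * (1 + T + r)`
  · set S := 1 + T + r with hS
    have hTS : S / 3 ≤ T := by
      have := neg_abs_le (T - r); linarith
    have hrS : S / 3 ≤ r := by
      have := le_abs_self (T - r); linarith
    have hS0 : 0 < S := by linarith
    have hT0 : 0 < T := by linarith
    have hr0 : 0 < r := by linarith
    have i1 : ∫ θ in 0..π, sin θ * (1 + (r ^ 2 + T ^ 2 + 2 * r * T * cos θ)) ^ (-((1 + α) / 2))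
        ≤ 2 * z ^ (-α) * (2 / T) := by
      calc _ ≤ ∫ θ in 0..π, 2 * z ^ (-α) *
              (sin θ * (1 + (r ^ 2 + T ^ 2 + 2 * r * T * cos θ)) ^ (-(-1 / 2) - 1 : ℝ)) := by
            refine intervalIntegral.integral_mono_on pi_pos.le ?_ ?_ fun θ hθ => ?_
            · exact (continuous_sin.mul (hcont _)).intervalIntegrable _ _
            · exact ((continuous_sin.mul (hcont _)).const_mul _).intervalIntegrable _ _
            have hpos : 0 < 1 + (r ^ 2 + T ^ 2 + 2 * r * T * cos θ) :=
              lt_of_lt_of_le (by positivity) (one_add_quad_ge hr hT θ)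
            have h1 := quad_rpow_le hα0.le (one_add_quad_ge hr hT θ)
            rw [← hz] at h1
            have h2 := h1.trans (mul_le_mul_of_nonneg_right hα2 (by positivity))
            rw [show -((1 + α) / 2) = -(α / 2) + (-(-1 / 2) - 1) by ring, rpow_add hpos]
            have := mul_le_mul_of_nonneg_right h2
              (mul_nonneg (hsin θ hθ) (rpow_nonneg hpos.le (-(-1 / 2) - 1 : ℝ)))
            linarith
        _ = 2 * z ^ (-α) * (1 / (r * T) * ((1 + (T + r) ^ 2) ^ (1 / 2 : ℝ)
              - (1 + (T - r) ^ 2) ^ (1 / 2 : ℝ))) := by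
            rw [intervalIntegral.integral_const_mul,
              integral_sin_quad_rpow hr0 hT0 (by norm_num)]
            rw [show -(-1 / 2 : ℝ) = 1 / 2 by norm_num]
            field_simp
            ring
        _ ≤ 2 * z ^ (-α) * (1 / (r * T) * (2 * r)) := by
            gcongr; exact sqrt_diff_le hr
        _ = _ := by field_simp
    have i2 : ∫ θ in 0..π, sin θ * (1 + (r ^ 2 + T ^ 2 + 2 * r * T * cos θ)) ^ (-((2 + α) / 2))
        ≤ 1 / (α * r * T) * (2 * z ^ (-α)) := by
      rw [show -((2 + α) / 2) = -(α / 2) - 1 by ring,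
        integral_sin_quad_rpow hr0 hT0 (by positivity), show 2 * (α / 2) = α by ring]
      gcongr
      have h1 := quad_rpow_le hα0.le (le_refl (1 + (T - r) ^ 2))
      rw [← hz] at h1
      have h2 := h1.trans (mul_le_mul_of_nonneg_right hα2 (by positivity))
      have : 0 ≤ (1 + (T + r) ^ 2) ^ (-(α / 2)) := by positivity
      linarith
    have split : ∫ θ in 0..π, sin θ *
        ((1 + (r ^ 2 + T ^ 2 + 2 * r * T * cos θ)) ^ (-((1 + α) / 2))
          + T * (1 + (r ^ 2 + T ^ 2 + 2 * r * T * cos θ)) ^ (-((2 + α) / 2))) =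
        (∫ θ in 0..π, sin θ * (1 + (r ^ 2 + T ^ 2 + 2 * r * T * cos θ)) ^ (-((1 + α) / 2)))
        + T * ∫ θ in 0..π, sin θ * (1 + (r ^ 2 + T ^ 2 + 2 * r * T * cos θ)) ^ (-((2 + α) / 2)) := by
      rw [← intervalIntegral.integral_const_mul, ← intervalIntegral.integral_add]
      · congr 1; ext θ; ring
      · exact (continuous_sin.mul (hcont _)).intervalIntegrable _ _
      · exact ((continuous_sin.mul (hcont _)).const_mul T).intervalIntegrable _ _
    rw [split]
    have b1 : 2 * z ^ (-α) * (2 / T) ≤ 12 * z ^ (-α) / S := by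
      have : 2 / T ≤ 6 / S := by rw [div_le_div_iff₀ hT0 hS0]; linarith
      calc _ ≤ 2 * z ^ (-α) * (6 / S) := by gcongr
        _ = _ := by ring
    have b2 : T * (1 / (α * r * T) * (2 * z ^ (-α))) ≤ (6 / α) * z ^ (-α) / S := by
      have : 2 / r ≤ 6 / S := by rw [div_le_div_iff₀ hr0 hS0]; linarith
      calc _ = (1 / α) * z ^ (-α) * (2 / r) := by field_simp
        _ ≤ (1 / α) * z ^ (-α) * (6 / S) := by gcongr
        _ = _ := by ring
    calc _ ≤ S * z ^ α * (12 * z ^ (-α) / S + (6 / α) * z ^ (-α) / S) := by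
          refine mul_le_mul_of_nonneg_left ?_ (by positivity)
          have := mul_le_mul_of_nonneg_left i2 hT
          linarith
      _ = (12 + 6 / α) * (z ^ α * z ^ (-α)) := by field_simp
      _ ≤ _ := by rw [hzz]; linarith

/-- Passage from the weight `(1 + ρ) ^ β` to `(1 + ρ ^ 2) ^ (β / 2)`, which suits the law of
cosines. -/
theorem data_bound {ρ β m u : ℝ} (hρ : 0 ≤ ρ) (hβ : 0 ≤ β) (hu : 0 ≤ u)
    (h : (1 + ρ) ^ β * u ≤ m) : u ≤ m * (1 + ρ ^ 2) ^ (-(β / 2)) := by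
  have h1 : (1 + ρ ^ 2) ^ (β / 2) ≤ (1 + ρ) ^ β := by
    calc (1 + ρ ^ 2) ^ (β / 2) ≤ ((1 + ρ) ^ 2) ^ (β / 2) := by
          gcongr; nlinarith
      _ = _ := by
          rw [← rpow_natCast, ← rpow_mul (by positivity)]; congr 1; push_cast; ring
  rw [rpow_neg (by positivity), ← div_eq_mul_inv, le_div_iff₀ (by positivity)]
  calc u * (1 + ρ ^ 2) ^ (β / 2) ≤ u * (1 + ρ) ^ β := by gcongr
    _ ≤ m := by linarith

/-- An orthonormal frame whose polar axis points along `x`. -/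
theorem exists_frame (x : E3) : ∃ b : OrthonormalBasis (Fin 3) ℝ E3, x = ‖x‖ • b 2 := by
  rcases eq_or_ne x 0 with rfl | hx
  · exact ⟨EuclideanSpace.basisFun _ _, by simp⟩
  have hn : ‖x‖ ≠ 0 := norm_ne_zero_iff.2 hx
  obtain ⟨b, hb⟩ := Orthonormal.exists_orthonormalBasis_extension_of_card_eq (𝕜 := ℝ) (E := E3)
    (ι := Fin 3) (by simp) (v := fun _ => ‖x‖⁻¹ • x) (s := {2}) (by
      constructor
      · intro i; simp [norm_smul, hn]
      · intro i j hij; exact absurd (Subsingleton.elim i j) hij)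
  exact ⟨b, by rw [hb 2 rfl, smul_smul, mul_inv_cancel₀ hn, one_smul]⟩

/-! ### The decay estimate -/

/-- pointwise decay for the homogeneous wave equation: for `α ∈ (0,1)` there is
`C > 0` such that any `C²` solution `w` of `∂_t²w = Δ_xw` on `(0,∞)×ℝ³` with data
`w(0,·) = w₀` (`C³`), `∂_tw(0,·) = w₁` (`C²`) satisfies
`(1+t+|x|)(1+|t−|x||)^α |w(t,x)| ≤ C·sup_y [(1+|y|)^{2+α}(|w₁(y)|+|∇w₀(y)|) + (1+|y|)^{1+α}|w₀(y)|]`. -/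
theorem pointwise_decay_wave (α : ℝ) (hα0 : 0 < α) (hα1 : α < 1) :
    ∃ C > 0, ∀ (w : PtE → ℝ) (w₀ w₁ : E3 → ℝ),
      ContDiffOn ℝ 2 w {p : PtE | 0 ≤ p.1} →
      ContDiff ℝ 3 w₀ → ContDiff ℝ 2 w₁ →
      (∀ x : E3, w (0, x) = w₀ x) →
      (∀ x : E3, fderivWithin ℝ w {p : PtE | 0 ≤ p.1} (0, x) (1, 0) = w₁ x) →
      (∀ t : ℝ, 0 < t → ∀ x : E3,
        fderiv ℝ (fun q : PtE => fderiv ℝ w q (1, 0)) (t, x) (1, 0) =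
          ∑ i, fderiv ℝ (fun q : PtE => fderiv ℝ w q (0, EuclideanSpace.single i 1)) (t, x)
            (0, EuclideanSpace.single i 1)) →
      ∀ M : ℝ,
        (∀ y : E3, (1 + ‖y‖) ^ (2 + α) * (|w₁ y| + ‖fderiv ℝ w₀ y‖)
            + (1 + ‖y‖) ^ (1 + α) * |w₀ y| ≤ M) →
        ∀ t : ℝ, 0 ≤ t → ∀ x : E3,
          (1 + t + ‖x‖) * (1 + |t - ‖x‖|) ^ α * |w (t, x)| ≤ C * M := by
  refine ⟨(180 + 6 / α) / 2, by positivity, ?_⟩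
  intro w w₀ w₁ hw hw₀ hw₁ hi0 hi1 hpde M hM T hT x
  set H : Set PtE := {p | 0 ≤ p.1} with hH
  have hHo : {p : PtE | 0 < p.1} ⊆ interior H :=
    interior_maximal (fun p (hp : 0 < p.1) => hp.le) (isOpen_lt continuous_const continuous_fst)
  have hHn : ∀ p : PtE, 0 < p.1 → H ∈ 𝓝 p := fun p hp => mem_interior_iff_mem_nhds.1 (hHo hp)
  have hHu : UniqueDiffOn ℝ H := by
    refine uniqueDiffOn_convex ?_ ⟨(1, 0), hHo (by simp)⟩
    exact (convex_Ici (0 : ℝ)).is_linear_preimage (f := fun p : PtE => p.1)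
      ⟨fun _ _ => rfl, fun _ _ => rfl⟩
  set W1 := fderivWithin ℝ w H with hW1
  set W2 := fderivWithin ℝ W1 H with hW2
  have hW1c : ContDiffOn ℝ 1 W1 H := hw.fderivWithin hHu (by norm_num)
  have hW2c : ContinuousOn W2 H := hW1c.continuousOn_fderivWithin hHu le_rfl
  have d1 : ∀ p : PtE, 0 < p.1 → HasFDerivAt w (W1 p) p := fun p hp =>
    (hw.differentiableOn (by norm_num) p hp.le).hasFDerivWithinAt.hasFDerivAt (hHn p hp)
  have d2 : ∀ p : PtE, 0 < p.1 → HasFDerivAt W1 (W2 p) p := fun p hp =>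
    (hW1c.differentiableOn (by norm_num) p hp.le).hasFDerivWithinAt.hasFDerivAt (hHn p hp)
  have ev : ∀ p : PtE, 0 < p.1 → ∀ᶠ q : PtE in 𝓝 p, 0 < q.1 := fun p hp =>
    (isOpen_lt continuous_const continuous_fst).mem_nhds hp
  have hdd : ∀ p : PtE, 0 < p.1 → ∀ u v,
      fderiv ℝ (fun q : PtE => fderiv ℝ w q u) p v = W2 p v u := by
    intro p hp u v
    have h1 : (fun q : PtE => fderiv ℝ w q u) =ᶠ[𝓝 p] fun q => W1 q u := by
      filter_upwards [ev p hp] with q hq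
      rw [(d1 q hq).fderiv]
    rw [h1.fderiv_eq, ((d2 p hp).clm_apply (hasFDerivAt_const u p)).fderiv]
    simp
  -- freezing the time variable at `0` for `t < 0` extends continuity to the whole space-time
  let cl : PtE → PtE := fun p => (max p.1 0, p.2)
  have hcl : Continuous cl := by fun_prop
  have hclH : ∀ p, cl p ∈ H := fun p => le_max_right p.1 0
  have hclid : ∀ p : PtE, 0 ≤ p.1 → cl p = p := fun p hp => by
    simp only [cl, max_eq_left hp]
  have hclev : ∀ p : PtE, 0 < p.1 → cl =ᶠ[𝓝 p] id := fun p hp => by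
    filter_upwards [ev p hp] with q hq
    exact hclid q hq.le
  obtain ⟨b, hb⟩ := exists_frame x
  have key := kirchhoff (w ∘ cl) (W1 ∘ cl) (W2 ∘ cl)
    (hw.continuousOn.comp_continuous hcl hclH) (hW1c.continuousOn.comp_continuous hcl hclH)
    (hW2c.comp_continuous hcl hclH)
    (fun p hp => by
      rw [Function.comp_apply, hclid p hp.le]
      exact (d1 p hp).congr_of_eventuallyEq ((hclev p hp).fun_comp w))
    (fun p hp => by
      rw [Function.comp_apply, hclid p hp.le]
      exact (d2 p hp).congr_of_eventuallyEq ((hclev p hp).fun_comp W1))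
    (fun p hp => by
      rw [Function.comp_apply, hclid p hp.le]
      simpa only [hdd p hp, Prod.mk.eta] using hpde p.1 hp p.2)
    b hT x
  have hcl0 : ∀ y : E3, cl (0, y) = (0, y) := fun y => hclid _ le_rfl
  simp only [Function.comp_apply, hcl0, hclid (T, x) hT, hi0] at key
  have hspace : ∀ y u : E3, W1 (0, y) (0, u) = fderiv ℝ w₀ y u := by
    intro y u
    have h1 : HasFDerivWithinAt w (W1 (0, y)) H (0, y) :=
      (hw.differentiableOn (by norm_num) (0, y) (le_refl (0 : ℝ))).hasFDerivWithinAt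
    have h2 : HasFDerivAt (fun y : E3 => ((0, y) : PtE)) (ContinuousLinearMap.inr ℝ ℝ E3) y :=
      hasFDerivAt_prodMk_right 0 y
    have h3 := h1.comp_hasFDerivAt y h2 (Eventually.of_forall fun y => le_refl (0 : ℝ))
    have h4 : w ∘ (fun y : E3 => ((0, y) : PtE)) = w₀ := funext hi0
    rw [h4] at h3
    rw [h3.fderiv]; rfl
  have hM0 : 0 ≤ M := le_trans (by positivity) (hM 0)
  set r := ‖x‖ with hr
  have hr0 : 0 ≤ r := norm_nonneg x
  -- `P` is the bound for the data at the points of the sphere with polar angle `θ`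
  set P : ℝ → ℝ := fun θ =>
    (1 + (r ^ 2 + T ^ 2 + 2 * r * T * cos θ)) ^ (-((1 + α) / 2))
        + T * (1 + (r ^ 2 + T ^ 2 + 2 * r * T * cos θ)) ^ (-((2 + α) / 2)) with hP
  have hPc : Continuous P := (continuous_quad_rpow hr0 hT _).add
    ((continuous_quad_rpow hr0 hT _).const_mul T)
  have hpt : ∀ θ ∈ Icc 0 π, ∀ φ, ‖sin θ * (w₀ (x + T • sphDir b θ φ)
      + T * W1 (0, x + T • sphDir b θ φ) (1, sphDir b θ φ))‖ ≤ sin θ * (M * P θ) := by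
    intro θ hθ φ
    set y := x + T • sphDir b θ φ with hy
    have hyn : ‖y‖ ^ 2 = r ^ 2 + T ^ 2 + 2 * r * T * cos θ := by
      rw [hy, hb]; exact norm_add_smul_sphDir_sq b r T θ φ
    have hs : W1 (0, y) (1, sphDir b θ φ) = w₁ y + fderiv ℝ w₀ y (sphDir b θ φ) := by
      rw [← hi1 y, ← hspace, ← map_add]; simp
    have n1 : 0 ≤ (1 + ‖y‖) ^ (2 + α) * (|w₁ y| + ‖fderiv ℝ w₀ y‖) := by positivity
    have n2 : 0 ≤ (1 + ‖y‖) ^ (1 + α) * |w₀ y| := by positivity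
    have m1 := data_bound (norm_nonneg y) (by linarith : 0 ≤ 2 + α)
      (by positivity) (by linarith [hM y] :
        (1 + ‖y‖) ^ (2 + α) * (|w₁ y| + ‖fderiv ℝ w₀ y‖) ≤ M)
    have m2 := data_bound (norm_nonneg y) (by linarith : 0 ≤ 1 + α)
      (by positivity) (by linarith [hM y] : (1 + ‖y‖) ^ (1 + α) * |w₀ y| ≤ M)
    rw [hyn] at m1 m2
    rw [norm_mul, norm_of_nonneg (sin_nonneg_of_mem_Icc hθ), hs]
    refine mul_le_mul_of_nonneg_left ?_ (sin_nonneg_of_mem_Icc hθ)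
    have hop : |fderiv ℝ w₀ y (sphDir b θ φ)| ≤ ‖fderiv ℝ w₀ y‖ := by
      simpa [norm_sphDir] using (fderiv ℝ w₀ y).le_opNorm (sphDir b θ φ)
    calc _ ≤ |w₀ y| + T * (|w₁ y| + ‖fderiv ℝ w₀ y‖) := by
          refine (norm_add_le _ _).trans ?_
          rw [norm_mul, norm_of_nonneg hT]
          refine add_le_add le_rfl (mul_le_mul_of_nonneg_left ?_ hT)
          exact (norm_add_le _ _).trans (add_le_add le_rfl hop)
      _ ≤ _ := by
          have := mul_le_mul_of_nonneg_left m1 hT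
          simp only [hP]; linarith
  have hbound : 4 * π * |w (T, x)| ≤ 2 * π * (M * ∫ θ in 0..π, sin θ * P θ) := by
    have h1 : ‖4 * π * w (T, x)‖ ≤ ∫ θ in 0..π, sin θ * (M * P θ) * (2 * π) := by
      rw [← key]
      refine intervalIntegral.norm_integral_le_of_norm_le pi_pos.le ?_ ?_
      · refine Eventually.of_forall fun θ hθ => ?_
        have := intervalIntegral.norm_integral_le_of_norm_le_const (a := 0) (b := 2 * π)
          fun φ _ => hpt θ ⟨hθ.1.le, hθ.2⟩ φ
        rwa [sub_zero, abs_of_pos two_pi_pos] at this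
      · exact ((continuous_sin.mul (hPc.const_mul M)).mul_const _).intervalIntegrable _ _
    rw [norm_mul, norm_of_nonneg (by positivity), norm_eq_abs] at h1
    refine h1.trans_eq ?_
    rw [← intervalIntegral.integral_const_mul, ← intervalIntegral.integral_const_mul]
    congr 1; ext θ; ring
  have hfin := profile_bound hα0 hα1 hr0 hT
  have hbound' : |w (T, x)| ≤ M / 2 * ∫ θ in 0..π, sin θ * P θ := by
    refine le_of_mul_le_mul_left (hbound.trans_eq ?_) (by positivity : 0 < 4 * π)
    ring
  calc _ ≤ (1 + T + r) * (1 + |T - r|) ^ α * (M / 2 * ∫ θ in 0..π, sin θ * P θ) := by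
        gcongr
    _ = M / 2 * ((1 + T + r) * (1 + |T - r|) ^ α * ∫ θ in 0..π, sin θ * P θ) := by ring
    _ ≤ M / 2 * (180 + 6 / α) := by gcongr
    _ = _ := by ring
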